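/- Let f : ℝⁿ → ℝⁿ be continuously differentiable and let F : ℝⁿ ⇉ ℝⁿ be given coordinatewise, F(x) = F₁(x₁) × ⋯ × F_n(x_n) for set-valued maps F_j : ℝ ⇉ ℝ with closed graphs. Define Φ(z) = f(z) + F(z) and the solution mapping S(p) = { z : p ∈ Φ(z) }. Let (z̄, p̄) ∈ gph Φ and set v̄ = p̄ − f(z̄). Assume that ∇f(z̄)ᵀ is a P-matrix and that for each j ∈ {1, …, n} the limiting normal cone satisfies N((z̄_j, v̄_j); gph F_j) ⊆ { (a,b) ∈ ℝ² : a·b ≤ 0 }. Then S has the Aubin property at p̄ for z̄. -/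

import Mathlib

open Filter Topology Set Metric RealInnerProductSpace
open scoped ENNReal NNReal Pointwise

noncomputable section

/-- Graph of a set-valued map. -/
def svGraph {α β : Type*} (F : α → Set β) : Set (α × β) := {p | p.2 ∈ F p.1}

/-- Inverse of a set-valued map. -/
def svInv {α β : Type*} (F : α → Set β) : β → Set α := fun y => {x | y ∈ F x}

/-- Local closedness of a set at a point of a metric space. -/
def LocClosedAt {α : Type*} [PseudoMetricSpace α] (s : Set α) (p : α) : Prop :=
  ∃ r : ℝ, 0 < r ∧ IsClosed (s ∩ Metric.closedBall p r)

section Cones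

variable {X : Type*} [NormedAddCommGroup X] [NormedSpace ℝ X]

/-- Bouligand-Severi contingent cone. -/
def contingentCone (Ω : Set X) (x : X) : Set X :=
  { u | ∃ (t : ℕ → ℝ) (uk : ℕ → X), (∀ k, 0 < t k) ∧
      Tendsto t atTop (𝓝 0) ∧ Tendsto uk atTop (𝓝 u) ∧ ∀ k, x + t k • uk k ∈ Ω }

/-- Bouligand paratingent cone. -/
def paratingentCone (Ω : Set X) (x : X) : Set X :=
  { u | ∃ (t : ℕ → ℝ) (uk : ℕ → X) (xk : ℕ → X), (∀ k, 0 < t k) ∧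
      Tendsto t atTop (𝓝 0) ∧ Tendsto uk atTop (𝓝 u) ∧
      (∀ k, xk k ∈ Ω) ∧ Tendsto xk atTop (𝓝 x) ∧ ∀ k, xk k + t k • uk k ∈ Ω }

end Cones

section NormalCones

variable {X : Type*} [NormedAddCommGroup X] [InnerProductSpace ℝ X]

/-- Fréchet (regular) normal cone. -/
def frechetNormalCone (Ω : Set X) (x : X) : Set X :=
  { v | ∀ ε : ℝ, 0 < ε → ∃ δ : ℝ, 0 < δ ∧ ∀ y ∈ Ω, ‖y - x‖ < δ →
      ⟪v, y - x⟫ ≤ ε * ‖y - x‖ }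

/-- Limiting (Mordukhovich) normal cone. -/
def limitingNormalCone (Ω : Set X) (x : X) : Set X :=
  { v | ∃ (xk : ℕ → X) (vk : ℕ → X), (∀ k, xk k ∈ Ω) ∧
      Tendsto xk atTop (𝓝 x) ∧ Tendsto vk atTop (𝓝 v) ∧
      ∀ k, vk k ∈ frechetNormalCone Ω (xk k) }

end NormalCones

section Derivatives

variable {E F : Type*} [NormedAddCommGroup E] [NormedSpace ℝ E]
  [NormedAddCommGroup F] [NormedSpace ℝ F]

/-- Graphical derivative. -/
def gDeriv (Fm : E → Set F) (x : E) (y : F) : E → Set F := fun u =>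
  {v | (u, v) ∈ contingentCone (svGraph Fm) (x, y)}

/-- Strict graphical derivative. -/
def sgDeriv (Fm : E → Set F) (x : E) (y : F) : E → Set F := fun u =>
  {v | (u, v) ∈ paratingentCone (svGraph Fm) (x, y)}

end Derivatives

section Coderivative

variable {E F : Type*} [NormedAddCommGroup E] [InnerProductSpace ℝ E]
  [NormedAddCommGroup F] [InnerProductSpace ℝ F]

/-- Coderivative: `w ∈ D*F(x|y)(z)` iff `(w, -z)` is in the limiting normal cone
to the graph of `F` (viewed inside the `ℓ²` product) at `(x, y)`. -/
def coDeriv (Fm : E → Set F) (x : E) (y : F) : F → Set E := fun z =>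
  { w | (WithLp.equiv 2 (E × F)).symm (w, -z) ∈
      limitingNormalCone ((WithLp.equiv 2 (E × F)).symm '' svGraph Fm)
        ((WithLp.equiv 2 (E × F)).symm (x, y)) }

end Coderivative

section Norms

variable {E F : Type*} [NormedAddCommGroup E] [NormedAddCommGroup F]

/-- Outer norm of a (positively homogeneous) set-valued map. -/
def outerNormSV (H : E → Set F) : ℝ≥0∞ :=
  ⨆ (x : E) (_ : ‖x‖ ≤ 1) (y : F) (_ : y ∈ H x), (‖y‖₊ : ℝ≥0∞)

/-- Inner norm of a (positively homogeneous) set-valued map. -/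
def innerNormSV (H : E → Set F) : ℝ≥0∞ :=
  ⨆ (x : E) (_ : ‖x‖ ≤ 1), ⨅ (y : F) (_ : y ∈ H x), (‖y‖₊ : ℝ≥0∞)

/-- Positive homogeneity of a set-valued map. -/
def PosHomogeneous {E F : Type*} [NormedAddCommGroup E] [NormedSpace ℝ E]
    [NormedAddCommGroup F] [NormedSpace ℝ F] (H : E → Set F) : Prop :=
  (0 : F) ∈ H 0 ∧ ∀ (c : ℝ), 0 < c → ∀ x, H (c • x) = c • (H x)

end Norms

section Stability

variable {E F : Type*} [NormedAddCommGroup E] [NormedAddCommGroup F]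

/-- Metric regularity with constant `κ`. -/
def MetrRegWith (κ : ℝ≥0) (Fm : E → Set F) (xbar : E) (ybar : F) : Prop :=
  ∃ U ∈ 𝓝 xbar, ∃ V ∈ 𝓝 ybar, ∀ x ∈ U, ∀ y ∈ V,
    EMetric.infEdist x (svInv Fm y) ≤ (κ : ℝ≥0∞) * EMetric.infEdist y (Fm x)

/-- The regularity modulus `reg (F; xbar|ybar)`. -/
def regMod (Fm : E → Set F) (xbar : E) (ybar : F) : ℝ≥0∞ :=
  ⨅ (κ : ℝ≥0) (_ : MetrRegWith κ Fm xbar ybar), (κ : ℝ≥0∞)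

/-- Aubin property with constant `κ`. -/
def AubinWith (κ : ℝ≥0) (S : F → Set E) (ybar : F) (xbar : E) : Prop :=
  ∃ V ∈ 𝓝 ybar, ∃ U ∈ 𝓝 xbar, ∀ y ∈ V, ∀ y' ∈ V, ∀ x ∈ S y' ∩ U,
    ∃ x' ∈ S y, ‖x - x'‖ ≤ (κ : ℝ) * ‖y - y'‖

/-- The Lipschitz modulus `lip (S; ybar|xbar)`. -/
def lipMod (S : F → Set E) (ybar : F) (xbar : E) : ℝ≥0∞ :=
  ⨅ (κ : ℝ≥0) (_ : AubinWith κ S ybar xbar), (κ : ℝ≥0∞)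

/-- Strong metric subregularity with constant `κ`. -/
def SubregWith (κ : ℝ≥0) (Fm : E → Set F) (xbar : E) (ybar : F) : Prop :=
  ∃ U ∈ 𝓝 xbar, ∀ x ∈ U, (‖x - xbar‖₊ : ℝ≥0∞) ≤ (κ : ℝ≥0∞) * EMetric.infEdist ybar (Fm x)

/-- The subregularity modulus `subreg (F; xbar|ybar)`. -/
def subregMod (Fm : E → Set F) (xbar : E) (ybar : F) : ℝ≥0∞ :=
  ⨅ (κ : ℝ≥0) (_ : SubregWith κ Fm xbar ybar), (κ : ℝ≥0∞)

/-- Isolated calmness with constant `κ`. -/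
def CalmWith (κ : ℝ≥0) (S : F → Set E) (ybar : F) (xbar : E) : Prop :=
  ∃ V ∈ 𝓝 ybar, ∃ U ∈ 𝓝 xbar, ∀ y ∈ V, ∀ x ∈ S y ∩ U, ‖x - xbar‖ ≤ (κ : ℝ) * ‖y - ybar‖

/-- The calmness modulus `clm (S; ybar|xbar)`. -/
def clmMod (S : F → Set E) (ybar : F) (xbar : E) : ℝ≥0∞ :=
  ⨅ (κ : ℝ≥0) (_ : CalmWith κ S ybar xbar), (κ : ℝ≥0∞)

/-- Strong metric regularity: metric regularity plus a single-valued localization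
of the inverse. -/
def StrongMetrReg (Fm : E → Set F) (xbar : E) (ybar : F) : Prop :=
  (∃ κ : ℝ≥0, MetrRegWith κ Fm xbar ybar) ∧
  ∃ U ∈ 𝓝 xbar, ∃ V ∈ 𝓝 ybar, ∀ y ∈ V, (svInv Fm y ∩ U).Subsingleton

end Stability

/-- A matrix is a P-matrix if all its principal minors are positive. -/
def IsPMatrix {n : ℕ} (A : Matrix (Fin n) (Fin n) ℝ) : Prop :=
  ∀ s : Finset (Fin n), s.Nonempty →
    0 < (A.submatrix (fun i : {i // i ∈ s} => (i : Fin n))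
          (fun i : {i // i ∈ s} => (i : Fin n))).det

/-!
If `S = Φ⁻¹` failed to have the Aubin property, then for every `c > 0` there would be a parameter
`p` near `p̄` and a graph point `u₀` near `(z̄, p̄)` from which every solution for `p` is farther
than `c⁻¹ ‖u₀.snd - p‖`. Minimizing `‖u.snd - p‖` over the graph with a small quadratic penalty
centred at `u₀` produces a nearby graph point carrying a Fréchet normal within `2c` of `(0, -e)`,
`‖e‖ = 1`. In the limit `c → 0` this gives a unit vector `e` with `0 ∈ D*Φ(z̄|p̄)(e)`.

Fréchet normals pull back along differentiable maps. The shear `(x, v) ↦ (x, f x + v)` therefore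
turns that inclusion into `-∇f(z̄)ᵀe ∈ D*F(z̄|v̄)(e)`, and the slices of the graph of `F` along each
coordinate into `-(∇f(z̄)ᵀe)ⱼ ∈ D*Fⱼ(z̄ⱼ|v̄ⱼ)(eⱼ)`. The cone condition now reads
`eⱼ (∇f(z̄)ᵀe)ⱼ ≤ 0` for all `j`, which is impossible for `e ≠ 0` as `∇f(z̄)ᵀ` is a P-matrix.
-/

section PMatrix

open Matrix

theorem det_diagonal_mul_add_diagonal {ι R : Type*} [Fintype ι] [DecidableEq ι] [CommRing R]
    (A : Matrix ι ι R) (t d : ι → R) :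
    (diagonal t * A + diagonal d).det = ∑ s : Finset ι, (∏ i ∈ s, t i) * (∏ i ∈ sᶜ, d i) *
      (A.submatrix (Subtype.val : s → ι) Subtype.val).det := by
  have hrow (s : Finset ι) : s.piecewise (diagonal t * A) (diagonal d) =
      fun i => s.piecewise t d i • s.piecewise A (1 : Matrix ι ι R) i := by
    ext i j
    by_cases hi : i ∈ s <;> simp [Finset.piecewise, hi, diagonal_mul, diagonal_apply, one_apply]
  have hadd := (detRowAlternating (R := R) (n := ι)).map_add_univ (diagonal t * A) (diagonal d)
  refine hadd.trans (Finset.sum_congr rfl fun s _ => ?_)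
  rw [hrow, AlternatingMap.map_smul_univ, Finset.prod_piecewise, Finset.univ_inter,
    ← Finset.compl_eq_univ_sdiff, smul_eq_mul]
  exact congrArg _ (det_piecewise_one_eq_submatrix_det A s)

theorem IsPMatrix.det_diagonal_mul_add_diagonal_pos {n : ℕ} {A : Matrix (Fin n) (Fin n) ℝ}
    (hA : IsPMatrix A) {t d : Fin n → ℝ} (ht : ∀ i, 0 ≤ t i) (hd : ∀ i, 0 ≤ d i)
    (htd : ∀ i, 0 < t i + d i) : 0 < (diagonal t * A + diagonal d).det := by
  have hminor (s : Finset (Fin n)) :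
      0 < (A.submatrix (Subtype.val : s → Fin n) Subtype.val).det := by
    rcases s.eq_empty_or_nonempty with rfl | hs
    · simp
    · exact hA s hs
  rw [det_diagonal_mul_add_diagonal]
  refine Finset.sum_pos' (fun s _ => ?_) ⟨Finset.univ.filter (0 < t ·), Finset.mem_univ _, ?_⟩
  · exact mul_nonneg (mul_nonneg (Finset.prod_nonneg fun i _ => ht i)
      (Finset.prod_nonneg fun i _ => hd i)) (hminor s).le
  · refine mul_pos (mul_pos (Finset.prod_pos fun i hi => by simpa using hi)
      (Finset.prod_pos fun i hi => ?_)) (hminor _)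
    have hti : t i ≤ 0 := by simpa using hi
    linarith [htd i]

theorem IsPMatrix.exists_mul_mulVec_pos {n : ℕ} {A : Matrix (Fin n) (Fin n) ℝ}
    (hA : IsPMatrix A) {x : Fin n → ℝ} (hx : x ≠ 0) : ∃ j, 0 < x j * (A *ᵥ x) j := by
  by_contra! hsign
  -- With these weights `x` lies in the kernel of `diagonal t * A + diagonal d`.
  let t : Fin n → ℝ := fun i => x i ^ 2
  let d : Fin n → ℝ := fun i => if x i = 0 then 1 else -(x i * (A *ᵥ x) i)
  have hker : (diagonal t * A + diagonal d) *ᵥ x = 0 := by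
    ext i
    by_cases hi : x i = 0
    · simp [add_mulVec, ← mulVec_mulVec, mulVec_diagonal, t, hi]
    · simp only [add_mulVec, ← mulVec_mulVec, Pi.add_apply, mulVec_diagonal, t, d, if_neg hi,
        Pi.zero_apply]
      ring
  have hd (i) : 0 ≤ d i := by
    by_cases hi : x i = 0
    · simp [d, hi]
    · simpa [d, hi] using hsign i
  have htd (i) : 0 < t i + d i := by
    by_cases hi : x i = 0
    · simp [t, d, hi]
    · exact add_pos_of_pos_of_nonneg (by positivity) (hd i)
  exact (hA.det_diagonal_mul_add_diagonal_pos (fun i => sq_nonneg (x i)) hd htd).ne'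
    (exists_mulVec_eq_zero_iff.1 ⟨x, hx, hker⟩)

end PMatrix

theorem exists_isMinOn_add_const_mul_dist_sq {X : Type*} [PseudoMetricSpace X] [ProperSpace X]
    {Ω : Set X} (hΩ : IsClosed Ω) {φ : X → ℝ} (hφ : ContinuousOn φ Ω) (hφ0 : ∀ x ∈ Ω, 0 ≤ φ x)
    {x₀ : X} (hx₀ : x₀ ∈ Ω) {s : ℝ} (hs : 0 < s) :
    ∃ x ∈ Ω, IsMinOn (fun u => φ u + s * dist u x₀ ^ 2) Ω x := by
  have hpenalty : Tendsto (fun u => s * dist u x₀ ^ 2) (cocompact X) atTop :=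
    ((tendsto_pow_atTop two_ne_zero).comp
      (tendsto_dist_right_cocompact_atTop x₀)).const_mul_atTop hs
  refine (hφ.add (by fun_prop)).exists_isMinOn' hΩ hx₀ ?_
  filter_upwards [(hpenalty.eventually_ge_atTop _).filter_mono inf_le_left,
    (eventually_principal.2 fun x hx => hx).filter_mono inf_le_right] with x hx hxΩ
  exact hx.trans (le_add_of_nonneg_left (hφ0 x hxΩ))

section FrechetNormals

variable {X Y : Type*} [NormedAddCommGroup X] [InnerProductSpace ℝ X]
  [NormedAddCommGroup Y] [InnerProductSpace ℝ Y]

theorem mem_frechetNormalCone_iff_isLittleO {Ω : Set X} {x v : X} :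
    v ∈ frechetNormalCone Ω x ↔
      (fun y => max ⟪v, y - x⟫ 0) =o[𝓝[Ω] x] fun y => y - x := by
  simp only [Asymptotics.isLittleO_iff, frechetNormalCone, mem_ofPred_eq]
  refine forall₂_congr fun ε hε => ?_
  simp only [eventually_nhdsWithin_iff, Metric.eventually_nhds_iff, dist_eq_norm]
  refine exists_congr fun δ => and_congr_right fun _ => forall_congr' fun y => ?_
  rw [Real.norm_of_nonneg (le_max_right _ _), max_le_iff,
    and_iff_left (by positivity : 0 ≤ ε * ‖y - x‖)]
  exact forall_comm

theorem neg_gradient_mem_frechetNormalCone [CompleteSpace X] {Ω : Set X} {φ : X → ℝ} {x a : X}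
    (hφ : HasGradientAt φ a x) (hmin : IsLocalMinOn φ Ω x) : -a ∈ frechetNormalCone Ω x := by
  rw [mem_frechetNormalCone_iff_isLittleO]
  refine (Asymptotics.IsBigO.of_bound' ?_).trans_isLittleO
    ((hasGradientAt_iff_isLittleO.1 hφ).mono nhdsWithin_le_nhds)
  filter_upwards [hmin] with y hy
  rw [Real.norm_of_nonneg (le_max_right _ _), inner_neg_left]
  exact max_le ((by linarith : _ ≤ φ y - φ x - ⟪a, y - x⟫).trans (le_abs_self _)) (norm_nonneg _)

/-- `hv` says that `v` is the image of `w` under the adjoint of `g'`, which need not exist as a map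
in the absence of completeness. -/
theorem mem_frechetNormalCone_of_hasFDerivAt {Ω : Set X} {Θ : Set Y} {g : X → Y} {g' : X →L[ℝ] Y}
    {x v : X} {w : Y} (hg : HasFDerivAt g g' x) (hgΩ : MapsTo g Ω Θ)
    (hw : w ∈ frechetNormalCone Θ (g x)) (hv : ∀ u, ⟪v, u⟫ = ⟪w, g' u⟫) :
    v ∈ frechetNormalCone Ω x := by
  rw [mem_frechetNormalCone_iff_isLittleO] at hw ⊢
  have htendsto : Tendsto g (𝓝[Ω] x) (𝓝[Θ] g x) :=
    hg.continuousAt.continuousWithinAt.tendsto_nhdsWithin hgΩ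
  have hnormal : (fun y => max ⟪w, g y - g x⟫ 0) =o[𝓝[Ω] x] fun y => y - x :=
    (hw.comp_tendsto htendsto).trans_isBigO (hg.isBigO_sub.mono nhdsWithin_le_nhds)
  have hremainder : (fun y => ⟪w, g y - g x - g' (y - x)⟫) =o[𝓝[Ω] x] fun y => y - x :=
    ((innerSL ℝ w).isBigO_comp _ _).trans_isLittleO (hg.isLittleO.mono nhdsWithin_le_nhds)
  refine (Asymptotics.IsBigO.of_bound' (.of_forall fun y => ?_)).trans_isLittleO
    (hnormal.add hremainder.norm_left)
  have hsplit : ⟪v, y - x⟫ = ⟪w, g y - g x⟫ - ⟪w, g y - g x - g' (y - x)⟫ := by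
    rw [hv, ← inner_sub_right, sub_sub_cancel]
  have hge := neg_abs_le ⟪w, g y - g x - g' (y - x)⟫
  rw [Real.norm_of_nonneg (le_max_right _ _),
    Real.norm_of_nonneg (add_nonneg (le_max_right _ _) (norm_nonneg _)), Real.norm_eq_abs, hsplit]
  refine max_le ?_ (by positivity)
  linarith [le_max_left ⟪w, g y - g x⟫ 0]

theorem hasGradientAt_norm [CompleteSpace X] {x : X} (hx : x ≠ 0) :
    HasGradientAt (‖·‖) (‖x‖⁻¹ • x) x := by
  have hx' : ‖x‖ ≠ 0 := norm_ne_zero_iff.2 hx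
  have h := (hasStrictFDerivAt_norm_sq x).hasFDerivAt.sqrt (by positivity)
  simp only [Real.sqrt_sq (norm_nonneg _)] at h
  refine hasGradientAt_iff_hasFDerivAt.2 (h.congr_fderiv (ContinuousLinearMap.ext fun y => ?_))
  simp only [InnerProductSpace.toDual_apply_apply, real_inner_smul_left, one_div,
    smul_apply, innerSL_apply_apply, smul_eq_mul, nsmul_eq_mul, Nat.cast_ofNat]
  field_simp

/-- A smooth variational principle: the penalty is quadratic rather than a multiple of the distance,
so the minimizer of the penalized function carries an exact Fréchet normal. -/
theorem exists_frechetNormalCone_near_neg_gradient [ProperSpace X] {Ω : Set X} (hΩ : IsClosed Ω)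
    {φ : X → ℝ} (hφ : ContinuousOn φ Ω) (hφ0 : ∀ x ∈ Ω, 0 ≤ φ x) {x₀ : X} (hx₀ : x₀ ∈ Ω)
    (hpos : 0 < φ x₀) {c : ℝ} (hc : 0 < c) :
    ∃ x ∈ Ω, c * ‖x - x₀‖ ≤ φ x₀ ∧
      ∀ a, HasGradientAt φ a x → ∃ v ∈ frechetNormalCone Ω x, ‖v + a‖ ≤ 2 * c := by
  set s : ℝ := c ^ 2 / φ x₀
  have hs : 0 < s := by positivity
  have hsφ : s * φ x₀ = c ^ 2 := div_mul_cancel₀ _ hpos.ne'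
  let ψ : X → ℝ := fun x => φ x + s * ‖x - x₀‖ ^ 2
  obtain ⟨x, hx, hmin⟩ : ∃ x ∈ Ω, IsMinOn ψ Ω x := by
    simpa only [dist_eq_norm] using exists_isMinOn_add_const_mul_dist_sq hΩ hφ hφ0 hx₀ hs
  have hdist : c * ‖x - x₀‖ ≤ φ x₀ := by
    have hpenalty_le : s * ‖x - x₀‖ ^ 2 ≤ φ x₀ := by
      have hle : φ x + s * ‖x - x₀‖ ^ 2 ≤ φ x₀ := by simpa [ψ] using hmin hx₀
      linarith [hφ0 x hx]
    refine (sq_le_sq₀ (by positivity) hpos.le).1 ?_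
    calc (c * ‖x - x₀‖) ^ 2 = φ x₀ * (s * ‖x - x₀‖ ^ 2) := by rw [mul_pow, ← hsφ]; ring
      _ ≤ φ x₀ * φ x₀ := mul_le_mul_of_nonneg_left hpenalty_le hpos.le
      _ = φ x₀ ^ 2 := (sq _).symm
  refine ⟨x, hx, hdist, fun a ha => ?_⟩
  have hψx : HasGradientAt ψ (a + (2 * s) • (x - x₀)) x := by
    have hsq : HasFDerivAt (fun u => ‖u - x₀‖ ^ 2) _ x := ((hasFDerivAt_id x).sub_const x₀).norm_sq
    refine hasGradientAt_iff_hasFDerivAt.2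
      ((ha.hasFDerivAt.add (hsq.const_mul s)).congr_fderiv (ContinuousLinearMap.ext fun u => ?_))
    change ⟪a, u⟫ + s * (2 • ⟪x - x₀, u⟫) = ⟪a + (2 * s) • (x - x₀), u⟫
    rw [inner_add_left, real_inner_smul_left, nsmul_eq_mul]
    ring
  refine ⟨_, neg_gradient_mem_frechetNormalCone hψx hmin.localize, ?_⟩
  rw [neg_add_rev, add_assoc, neg_add_cancel, add_zero, norm_neg, norm_smul,
    Real.norm_of_nonneg (by positivity)]
  have hpenalty : s * ‖x - x₀‖ ≤ c := by
    refine le_of_mul_le_mul_left ?_ hc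
    calc c * (s * ‖x - x₀‖) = s * (c * ‖x - x₀‖) := mul_left_comm _ _ _
      _ ≤ s * φ x₀ := mul_le_mul_of_nonneg_left hdist hs.le
      _ = c * c := hsφ.trans (sq c)
  linarith

theorem mem_limitingNormalCone_of_continuousAt {Ω : Set X} {Θ : Set Y} {p : Y → X} {q : Y × Y → X}
    {y w : Y} (hp : ContinuousAt p y) (hpΩ : MapsTo p Θ Ω) (hq : ContinuousAt q (y, w))
    (hpq : ∀ y ∈ Θ, ∀ w ∈ frechetNormalCone Θ y, q (y, w) ∈ frechetNormalCone Ω (p y))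
    (hw : w ∈ limitingNormalCone Θ y) : q (y, w) ∈ limitingNormalCone Ω (p y) := by
  obtain ⟨yk, wk, hyk, hyk_tendsto, hwk_tendsto, hwk⟩ := hw
  exact ⟨p ∘ yk, fun k => q (yk k, wk k), fun k => hpΩ (hyk k), hp.tendsto.comp hyk_tendsto,
    hq.tendsto.comp (hyk_tendsto.prodMk_nhds hwk_tendsto), fun k => hpq _ (hyk k) _ (hwk k)⟩

end FrechetNormals

section L2Graph

variable {E F : Type*}

/-- The graph of a set-valued map as a subset of the `ℓ²` product, where its normals are taken. -/
def l2Graph (Φ : E → Set F) : Set (WithLp 2 (E × F)) :=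
  {u | u.snd ∈ Φ u.fst}

theorem mem_l2Graph {Φ : E → Set F} {u : WithLp 2 (E × F)} : u ∈ l2Graph Φ ↔ u.snd ∈ Φ u.fst :=
  Iff.rfl

theorem image_svGraph_eq_l2Graph (Φ : E → Set F) :
    (WithLp.equiv 2 (E × F)).symm '' svGraph Φ = l2Graph Φ :=
  (WithLp.equiv 2 (E × F)).symm.image_eq_preimage_symm _

theorem isClosed_l2Graph_iff [TopologicalSpace E] [TopologicalSpace F] {Φ : E → Set F} :
    IsClosed (l2Graph Φ) ↔ IsClosed (svGraph Φ) :=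
  (WithLp.homeomorphProd 2 E F).isClosed_preimage (s := svGraph Φ)

theorem mem_coDeriv_iff [NormedAddCommGroup E] [InnerProductSpace ℝ E] [NormedAddCommGroup F]
    [InnerProductSpace ℝ F] {Φ : E → Set F} {x w : E} {y z : F} :
    w ∈ coDeriv Φ x y z ↔
      WithLp.toLp 2 (w, -z) ∈ limitingNormalCone (l2Graph Φ) (WithLp.toLp 2 (x, y)) := by
  rw [coDeriv, image_svGraph_eq_l2Graph]
  rfl

end L2Graph

section Calculus

section Sum

theorem isClosed_svGraph_vadd {E F : Type*} [TopologicalSpace E] [AddGroup F] [TopologicalSpace F]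
    [IsTopologicalAddGroup F] {f : E → F} (hf : Continuous f) {Φ : E → Set F}
    (hΦ : IsClosed (svGraph Φ)) :
    IsClosed (svGraph fun x => f x +ᵥ Φ x) := by
  have h : svGraph (fun x => f x +ᵥ Φ x) = (fun p : E × F => (p.1, -f p.1 + p.2)) ⁻¹' svGraph Φ :=
    Set.ext fun _ => mem_vadd_set_iff_neg_vadd_mem
  exact h ▸ hΦ.preimage (by fun_prop)

variable {E F : Type*} [NormedAddCommGroup E] [InnerProductSpace ℝ E] [CompleteSpace E]
  [NormedAddCommGroup F] [InnerProductSpace ℝ F] [CompleteSpace F]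

theorem add_adjoint_mem_frechetNormalCone_l2Graph {f : E → F} {f' : E →L[ℝ] F} {Φ : E → Set F}
    {u v : WithLp 2 (E × F)} (hf : HasFDerivAt f f' u.fst)
    (hv : v ∈ frechetNormalCone (l2Graph fun x => f x +ᵥ Φ x)
      (WithLp.toLp 2 (u.fst, f u.fst + u.snd))) :
    WithLp.toLp 2 (v.fst + f'.adjoint v.snd, v.snd) ∈ frechetNormalCone (l2Graph Φ) u := by
  let shear : WithLp 2 (E × F) → WithLp 2 (E × F) := fun t => WithLp.toLp 2 (t.fst, f t.fst + t.snd)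
  let L := (WithLp.prodContinuousLinearEquiv 2 ℝ E F).symm
  let fst := WithLp.fstL 2 ℝ E F
  let snd := WithLp.sndL 2 ℝ E F
  have hshear : HasFDerivAt shear (L.toContinuousLinearMap ∘L fst.prod (f' ∘L fst + snd)) u :=
    L.hasFDerivAt.comp u (fst.hasFDerivAt.prodMk ((hf.comp u fst.hasFDerivAt).add snd.hasFDerivAt))
  have hmaps : MapsTo shear (l2Graph Φ) (l2Graph fun x => f x +ᵥ Φ x) :=
    fun t ht => vadd_mem_vadd_set (s := Φ t.fst) ht
  refine mem_frechetNormalCone_of_hasFDerivAt hshear hmaps hv fun t => ?_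
  change ⟪v.fst + f'.adjoint v.snd, t.fst⟫ + ⟪v.snd, t.snd⟫ =
    ⟪v.fst, t.fst⟫ + ⟪v.snd, f' t.fst + t.snd⟫
  rw [inner_add_left, inner_add_right, ContinuousLinearMap.adjoint_inner_left, add_assoc]

theorem sub_adjoint_mem_coDeriv {f : E → F} (hf : ContDiff ℝ 1 f) {Φ : E → Set F} {x w : E}
    {y z : F} (hw : w ∈ coDeriv (fun x => f x +ᵥ Φ x) x y z) :
    w - (fderiv ℝ f x).adjoint z ∈ coDeriv Φ x (y - f x) z := by
  rw [mem_coDeriv_iff] at hw ⊢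
  let p : WithLp 2 (E × F) → WithLp 2 (E × F) := fun u => WithLp.toLp 2 (u.fst, u.snd - f u.fst)
  let q : WithLp 2 (E × F) × WithLp 2 (E × F) → WithLp 2 (E × F) := fun t =>
    WithLp.toLp 2 (t.2.fst + (fderiv ℝ f t.1.fst).adjoint t.2.snd, t.2.snd)
  have hp : Continuous p := (WithLp.prod_continuous_toLp 2 E F).comp (by fun_prop)
  have : Continuous fun x => (fderiv ℝ f x).adjoint :=
    ContinuousLinearMap.adjoint.continuous.comp (hf.continuous_fderiv one_ne_zero)
  have hq : Continuous q := (WithLp.prod_continuous_toLp 2 E F).comp (by fun_prop)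
  have hpΦ : MapsTo p (l2Graph fun x => f x +ᵥ Φ x) (l2Graph Φ) := fun u hu => by
    rw [mem_l2Graph, mem_vadd_set_iff_neg_vadd_mem, vadd_eq_add, neg_add_eq_sub] at hu
    exact hu
  have hbase (u) : WithLp.toLp 2 ((p u).fst, f (p u).fst + (p u).snd) = u :=
    congrArg (fun b => WithLp.toLp 2 (u.fst, b)) (add_sub_cancel _ _)
  have hlimit := mem_limitingNormalCone_of_continuousAt hp.continuousAt hpΦ hq.continuousAt
    (fun u _ v hv => add_adjoint_mem_frechetNormalCone_l2Graph
      (hf.differentiable one_ne_zero _).hasFDerivAt (by rwa [hbase])) hw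
  simpa [p, q, sub_eq_add_neg] using hlimit

end Sum

section Pi

variable {ι : Type*} {E G : ι → Type*}

/-- The set-valued map `x ↦ ∏ j, Φ j (x j)` acting coordinatewise on an `ℓ²` product. -/
def svPi (Φ : ∀ j, E j → Set (G j)) : PiLp 2 E → Set (PiLp 2 G) :=
  fun x => {v | ∀ j, v j ∈ Φ j (x j)}

theorem isClosed_svGraph_svPi [∀ j, TopologicalSpace (E j)] [∀ j, TopologicalSpace (G j)]
    {Φ : ∀ j, E j → Set (G j)} (hΦ : ∀ j, IsClosed (svGraph (Φ j))) :
    IsClosed (svGraph (svPi Φ)) := by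
  have h : svGraph (svPi Φ) = ⋂ j, (fun p => (p.1 j, p.2 j)) ⁻¹' svGraph (Φ j) := by
    ext p
    simp [svGraph, svPi]
  rw [h]
  exact isClosed_iInter fun j => (hΦ j).preimage (by fun_prop)

variable [Fintype ι] [∀ j, NormedAddCommGroup (E j)] [∀ j, InnerProductSpace ℝ (E j)]
  [∀ j, NormedAddCommGroup (G j)] [∀ j, InnerProductSpace ℝ (G j)] {Φ : ∀ j, E j → Set (G j)}

theorem inner_piLp_single_right [DecidableEq ι] (x : PiLp 2 E) (j : ι) (a : E j) :
    ⟪x, PiLp.single 2 j a⟫ = ⟪x j, a⟫ := by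
  rw [PiLp.inner_apply, Finset.sum_eq_single j (fun i _ hi => ?_) (by simp), PiLp.single_eq_same]
  rw [PiLp.single_eq_of_ne 2 hi, inner_zero_right]

/-- A coordinate graph embeds isometrically into the product graph as an affine slice. -/
theorem apply_mem_frechetNormalCone_l2Graph {u v : WithLp 2 (PiLp 2 E × PiLp 2 G)}
    (hu : u ∈ l2Graph (svPi Φ)) (hv : v ∈ frechetNormalCone (l2Graph (svPi Φ)) u) (j : ι) :
    WithLp.toLp 2 (v.fst j, v.snd j) ∈
      frechetNormalCone (l2Graph (Φ j)) (WithLp.toLp 2 (u.fst j, u.snd j)) := by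
  classical
  let embed : WithLp 2 (E j × G j) →L[ℝ] WithLp 2 (PiLp 2 E × PiLp 2 G) :=
    (WithLp.prodContinuousLinearEquiv 2 ℝ _ _).symm.toContinuousLinearMap ∘L
      (((PiLp.continuousLinearEquiv 2 ℝ E).symm.toContinuousLinearMap ∘L
        ContinuousLinearMap.single ℝ E j).prodMap
      ((PiLp.continuousLinearEquiv 2 ℝ G).symm.toContinuousLinearMap ∘L
        ContinuousLinearMap.single ℝ G j)) ∘L
      (WithLp.prodContinuousLinearEquiv 2 ℝ _ _).toContinuousLinearMap
  let u' : WithLp 2 (E j × G j) := WithLp.toLp 2 (u.fst j, u.snd j)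
  let slice : WithLp 2 (E j × G j) → WithLp 2 (PiLp 2 E × PiLp 2 G) := fun t => u + embed (t - u')
  have hslice : HasFDerivAt slice embed u' :=
    (embed.hasFDerivAt.comp u' ((hasFDerivAt_id u').sub_const u')).const_add u
  have hmaps : MapsTo slice (l2Graph (Φ j)) (l2Graph (svPi Φ)) := by
    intro t ht i
    change u.snd i + (Pi.single j (t.snd - u.snd j) : ∀ i, G i) i ∈
      Φ i (u.fst i + (Pi.single j (t.fst - u.fst j) : ∀ i, E i) i)
    obtain rfl | hi := eq_or_ne i j
    · simpa [mem_l2Graph] using ht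
    · simpa [hi] using hu i
  refine mem_frechetNormalCone_of_hasFDerivAt hslice hmaps (by simpa [slice, u'] using hv)
    fun t => ?_
  change ⟪v.fst j, t.fst⟫ + ⟪v.snd j, t.snd⟫ =
    ⟪v.fst, PiLp.single 2 j t.fst⟫ + ⟪v.snd, PiLp.single 2 j t.snd⟫
  rw [inner_piLp_single_right, inner_piLp_single_right]

theorem apply_mem_coDeriv_of_mem_coDeriv_svPi {x w : PiLp 2 E} {y z : PiLp 2 G}
    (hw : w ∈ coDeriv (svPi Φ) x y z) (j : ι) :
    w j ∈ coDeriv (Φ j) (x j) (y j) (z j) := by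
  rw [mem_coDeriv_iff] at hw ⊢
  let p : WithLp 2 (PiLp 2 E × PiLp 2 G) → WithLp 2 (E j × G j) := fun u =>
    WithLp.toLp 2 (u.fst j, u.snd j)
  have hp : Continuous p := (WithLp.prod_continuous_toLp 2 _ _).comp
    (((PiLp.continuous_apply 2 E j).comp (WithLp.continuous_fst 2 _ _)).prodMk
      ((PiLp.continuous_apply 2 G j).comp (WithLp.continuous_snd 2 _ _)))
  exact mem_limitingNormalCone_of_continuousAt (p := p) (q := fun t => p t.2) hp.continuousAt
    (fun u (hu : u ∈ l2Graph (svPi Φ)) => hu j) (hp.comp continuous_snd).continuousAt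
    (fun u hu v hv => apply_mem_frechetNormalCone_l2Graph hu hv j) hw

end Pi

end Calculus

section MordukhovichCriterion

variable {E F : Type*} [NormedAddCommGroup E] [InnerProductSpace ℝ E]
  [NormedAddCommGroup F] [InnerProductSpace ℝ F]

theorem hasGradientAt_norm_snd_sub [CompleteSpace E] [CompleteSpace F] {u : WithLp 2 (E × F)}
    {p : F} (hu : u.snd ≠ p) :
    HasGradientAt (fun t : WithLp 2 (E × F) => ‖t.snd - p‖)
      (WithLp.toLp 2 (0, ‖u.snd - p‖⁻¹ • (u.snd - p))) u := by
  have h := (hasGradientAt_norm (sub_ne_zero.2 hu)).hasFDerivAt.comp u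
    ((WithLp.sndL 2 ℝ E F).hasFDerivAt.sub_const p)
  refine hasGradientAt_iff_hasFDerivAt.2 (h.congr_fderiv (ContinuousLinearMap.ext fun t => ?_))
  change ⟪‖u.snd - p‖⁻¹ • (u.snd - p), t.snd⟫ =
    ⟪(0 : E), t.fst⟫ + ⟪‖u.snd - p‖⁻¹ • (u.snd - p), t.snd⟫
  rw [inner_zero_left, zero_add]

variable [FiniteDimensional ℝ E] [FiniteDimensional ℝ F] {Φ : E → Set F} {x : E} {y : F}

theorem exists_frechetNormalCone_l2Graph_of_solution_far (hΦ : IsClosed (svGraph Φ)) {p : F}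
    {u₀ : WithLp 2 (E × F)} (hu₀ : u₀ ∈ l2Graph Φ) (hp : u₀.snd ≠ p) {c : ℝ} (hc : 0 < c)
    (hfar : ∀ x' ∈ svInv Φ p, ‖u₀.snd - p‖ < c * ‖u₀.fst - x'‖) :
    ∃ u ∈ l2Graph Φ, c * ‖u - u₀‖ ≤ ‖u₀.snd - p‖ ∧ ∃ e : F, ‖e‖ = 1 ∧
      ∃ v ∈ frechetNormalCone (l2Graph Φ) u, ‖v - WithLp.toLp 2 (0, -e)‖ ≤ 2 * c := by
  have hcont : Continuous fun t : WithLp 2 (E × F) => ‖t.snd - p‖ := by fun_prop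
  obtain ⟨u, hu, hdist, hnormal⟩ := exists_frechetNormalCone_near_neg_gradient
    (isClosed_l2Graph_iff.2 hΦ) hcont.continuousOn (fun _ _ => norm_nonneg _) hu₀
    (norm_pos_iff.2 (sub_ne_zero.2 hp)) hc
  have hup : u.snd ≠ p := by
    intro hup
    have hfst : ‖u₀.fst - u.fst‖ ≤ ‖u - u₀‖ := by
      rw [norm_sub_rev u]
      exact WithLp.norm_fst_le E (u₀ - u)
    have hsol : u.fst ∈ svInv Φ p := hup ▸ hu
    exact (hfar u.fst hsol).not_ge ((mul_le_mul_of_nonneg_left hfst hc.le).trans hdist)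
  obtain ⟨v, hv, hvnorm⟩ := hnormal _ (hasGradientAt_norm_snd_sub hup)
  set e : F := ‖u.snd - p‖⁻¹ • (u.snd - p)
  have he : v - WithLp.toLp 2 (0, -e) = v + WithLp.toLp 2 (0, e) := by
    rw [sub_eq_add_neg, ← WithLp.toLp_neg, Prod.neg_mk, neg_zero, neg_neg]
  exact ⟨u, hu, hdist, e, norm_smul_inv_norm (𝕜 := ℝ) (sub_ne_zero.2 hup), v, hv, he ▸ hvnorm⟩

theorem exists_near_frechetNormalCone_of_not_aubinWith (hΦ : IsClosed (svGraph Φ)) {c : ℝ≥0}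
    (hc : 0 < c) (hS : ¬AubinWith c⁻¹ (svInv Φ) y x) :
    ∃ u ∈ l2Graph Φ, dist u (WithLp.toLp 2 (x, y)) ≤ 3 * c ∧ ∃ e : F, ‖e‖ = 1 ∧
      ∃ v ∈ frechetNormalCone (l2Graph Φ) u, dist v (WithLp.toLp 2 (0, -e)) ≤ 2 * c := by
  have hc' : (0 : ℝ) < c := hc
  have hnhds : (WithLp.toLp 2 : E × F → _) ⁻¹' ball (WithLp.toLp 2 (x, y)) c ∈ 𝓝 (x, y) :=
    (WithLp.prod_continuous_toLp 2 E F).continuousAt.preimage_mem_nhds (ball_mem_nhds _ hc')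
  obtain ⟨U, hU, V, hV, hUV⟩ := mem_nhds_prod_iff.1 hnhds
  simp only [AubinWith, not_exists, not_and, not_forall] at hS
  obtain ⟨p, hp, q, hq, x₀, hx₀, hfar⟩ := hS (V ∩ ball y (c ^ 2))
    (inter_mem hV (ball_mem_nhds y (by positivity))) U hU
  have hfar' (x') (hx' : x' ∈ svInv Φ p) : ‖q - p‖ < c * ‖x₀ - x'‖ := by
    have hlt := not_le.1 (hfar x' hx')
    rwa [NNReal.coe_inv, inv_mul_lt_iff₀ hc', norm_sub_rev] at hlt
  have hqp : q ≠ p := by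
    rintro rfl
    simpa using hfar' x₀ hx₀.1
  obtain ⟨u, hu, hdist, hnormal⟩ := exists_frechetNormalCone_l2Graph_of_solution_far hΦ
    (u₀ := WithLp.toLp 2 (x₀, q)) hx₀.1 hqp hc' hfar'
  simp only [← dist_eq_norm] at hdist hnormal
  refine ⟨u, hu, ?_, hnormal⟩
  have hqp_dist : dist q p < 2 * c ^ 2 := by
    linarith [dist_triangle_right q p y, mem_ball.1 hq.2, mem_ball.1 hp.2]
  have hu₀ : dist u (WithLp.toLp 2 (x₀, q)) ≤ 2 * c := by
    refine le_of_mul_le_mul_left (hdist.trans (hqp_dist.le.trans_eq ?_)) hc'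
    ring
  have hx₀q : dist (WithLp.toLp 2 (x₀, q)) (WithLp.toLp 2 (x, y)) < c := hUV ⟨hx₀.2, hq.1⟩
  linarith [dist_triangle u (WithLp.toLp 2 (x₀, q)) (WithLp.toLp 2 (x, y))]

/-- The Mordukhovich criterion, in the direction from coderivative to Aubin property. -/
theorem exists_aubinWith_of_forall_zero_mem_coDeriv (hΦ : IsClosed (svGraph Φ))
    (hker : ∀ z, 0 ∈ coDeriv Φ x y z → z = 0) : ∃ κ : ℝ≥0, AubinWith κ (svInv Φ) y x := by
  by_contra! hS
  let c : ℕ → ℝ≥0 := fun k => 1 / (k + 1)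
  have hc (a : ℝ) : Tendsto (fun k => a * (c k : ℝ)) atTop (𝓝 0) := by
    simpa [c] using (tendsto_one_div_add_atTop_nhds_zero_nat (𝕜 := ℝ)).const_mul a
  choose u hu hu_dist e he v hv hv_dist using fun k =>
    exists_near_frechetNormalCone_of_not_aubinWith hΦ (c := c k) (by positivity) (hS (c k)⁻¹)
  obtain ⟨e₀, he₀, σ, hσ, hlim⟩ := (isCompact_sphere (0 : F) 1).tendsto_subseq
    (fun k => mem_sphere_zero_iff_norm.2 (he k))
  have hu_lim : Tendsto u atTop (𝓝 (WithLp.toLp 2 (x, y))) :=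
    tendsto_iff_dist_tendsto_zero.2 (squeeze_zero (fun _ => dist_nonneg) hu_dist (hc 3))
  have he_lim : Tendsto (fun k => WithLp.toLp 2 ((0 : E), -e (σ k))) atTop
      (𝓝 (WithLp.toLp 2 (0, -e₀))) :=
    ((WithLp.prod_continuous_toLp 2 E F).tendsto _).comp (tendsto_const_nhds.prodMk_nhds hlim.neg)
  have hv_lim : Tendsto (v ∘ σ) atTop (𝓝 (WithLp.toLp 2 (0, -e₀))) :=
    he_lim.congr_dist (squeeze_zero (fun _ => dist_nonneg)
      (fun k => (dist_comm _ _).trans_le (hv_dist (σ k))) ((hc 2).comp hσ.tendsto_atTop))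
  have hmem : 0 ∈ coDeriv Φ x y e₀ := mem_coDeriv_iff.2
    ⟨u ∘ σ, v ∘ σ, fun k => hu (σ k), hu_lim.comp hσ.tendsto_atTop, hv_lim, fun k => hv (σ k)⟩
  exact ne_of_mem_sphere he₀ one_ne_zero (hker e₀ hmem)

end MordukhovichCriterion

theorem adjoint_apply_eq_transpose_mulVec {m n : Type*} [Fintype m] [Fintype n] [DecidableEq n]
    {L : EuclideanSpace ℝ n →L[ℝ] EuclideanSpace ℝ m} {J : Matrix m n ℝ}
    (hJ : ∀ i j, J i j = L (EuclideanSpace.single j 1) i) (e : EuclideanSpace ℝ m) (j : n) :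
    L.adjoint e j = (J.transpose.mulVec e) j := by
  calc L.adjoint e j = ⟪L.adjoint e, EuclideanSpace.single j 1⟫ := by
        simp [EuclideanSpace.inner_single_right]
    _ = ⟪e, L (EuclideanSpace.single j 1)⟫ := L.adjoint_inner_left _ _
    _ = (J.transpose.mulVec e) j := by
        simp [PiLp.inner_apply, Matrix.mulVec, dotProduct, hJ]

/-- Sufficient condition for the Aubin property of the solution mapping of
`f(z) + F(z) ∋ p` with coordinatewise `F`, a P-matrix Jacobian transpose, and
monotone-type normal cone conditions. -/
theorem aubin_of_PMatrix {n : ℕ}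
    (f : EuclideanSpace ℝ (Fin n) → EuclideanSpace ℝ (Fin n)) (hf : ContDiff ℝ 1 f)
    (Fj : Fin n → ℝ → Set ℝ) (hFj : ∀ j, IsClosed (svGraph (Fj j)))
    (Phi : EuclideanSpace ℝ (Fin n) → Set (EuclideanSpace ℝ (Fin n)))
    (hPhi : Phi = fun z =>
      {w | ∃ v : EuclideanSpace ℝ (Fin n), (∀ j, v j ∈ Fj j (z j)) ∧ w = f z + v})
    (zbar pbar : EuclideanSpace ℝ (Fin n)) (hzp : pbar ∈ Phi zbar)
    (vbar : EuclideanSpace ℝ (Fin n)) (hvbar : vbar = pbar - f zbar)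
    (J : Matrix (Fin n) (Fin n) ℝ)
    (hJ : ∀ i j, J i j = fderiv ℝ f zbar (EuclideanSpace.single j (1 : ℝ)) i)
    (hP : IsPMatrix J.transpose)
    (hN : ∀ j, limitingNormalCone
        ((WithLp.equiv 2 (ℝ × ℝ)).symm '' svGraph (Fj j))
        ((WithLp.equiv 2 (ℝ × ℝ)).symm (zbar j, vbar j)) ⊆
      {q : WithLp 2 (ℝ × ℝ) |
        (WithLp.equiv 2 (ℝ × ℝ) q).1 * (WithLp.equiv 2 (ℝ × ℝ) q).2 ≤ 0}) :
    ∃ κ : ℝ≥0, AubinWith κ (svInv Phi) pbar zbar := by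
  have hΦ : Phi = fun z => f z +ᵥ svPi Fj z := by
    rw [hPhi]
    ext z w
    exact exists_congr fun v => and_congr_right' eq_comm
  rw [hΦ]
  refine exists_aubinWith_of_forall_zero_mem_coDeriv
    (isClosed_svGraph_vadd hf.continuous (isClosed_svGraph_svPi hFj)) fun e he => ?_
  have hsign (j : Fin n) : e j * (J.transpose.mulVec e) j ≤ 0 := by
    have hcoord := apply_mem_coDeriv_of_mem_coDeriv_svPi (sub_adjoint_mem_coDeriv hf he) j
    rw [← hvbar] at hcoord
    have hprod : (0 - (fderiv ℝ f zbar).adjoint e) j * (-e j) ≤ 0 := hN j hcoord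
    rw [← adjoint_apply_eq_transpose_mulVec hJ, mul_comm]
    simpa using hprod
  by_contra he0
  obtain ⟨j, hj⟩ := hP.exists_mul_mulVec_pos (mt (WithLp.ofLp_eq_zero 2).1 he0)
  exact (hsign j).not_gt hj

end
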